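/- If a table t with n+1 columns is (1,n,n+1)-safe, then for every row b0 of t and every vector b' differing from b0 in exactly one coordinate, b' also occurs as a row of t, and moreover b' occurs with the same multiplicity as b0. -/

import Mathlib

/-- XOR-sum of a Boolean row (entries in `ZMod 2`). -/
def xorSum {N : ℕ} (r : Fin N → ZMod 2) : ZMod 2 := ∑ i, r i

/-- Reduction: keep only the rows with bit `b` at column `j`. -/
def reduce {N : ℕ} (j : Fin N) (b : ZMod 2) (t : Multiset (Fin N → ZMod 2)) :
    Multiset (Fin N → ZMod 2) :=
  t.filter (fun r => r j = b)

/-- `(1,m,N)`-safety: after any `m` reductions, equally many rows XOR-sum to 0 and to 1. -/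
def safeB {N : ℕ} : ℕ → Multiset (Fin N → ZMod 2) → Prop
  | 0, t => (t.filter (fun r => xorSum r = 0)).card = (t.filter (fun r => xorSum r = 1)).card
  | m + 1, t => ∀ (j : Fin N) (c : ZMod 2), safeB m (reduce j c t)

/-- Index of the `j`-th entry of the `i`-th block of size `ℓ`. -/
def blockIdx {N x ℓ : ℕ} (hN : x * ℓ ≤ N) (i : Fin x) (j : Fin ℓ) : Fin N :=
  ⟨i.1 * ℓ + j.1, by
    have h1 : i.1 * ℓ + j.1 < (i.1 + 1) * ℓ := by
      calc i.1 * ℓ + j.1 < i.1 * ℓ + ℓ := Nat.add_lt_add_left j.2 _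
        _ = (i.1 + 1) * ℓ := (Nat.succ_mul i.1 ℓ).symm
    exact lt_of_lt_of_le h1 (le_trans (Nat.mul_le_mul i.2 (Nat.le_refl ℓ)) hN)⟩

/-- XOR-sum of the `i`-th block of `ℓ` entries of a row. -/
def blockSum {N x ℓ : ℕ} (hN : x * ℓ ≤ N) (i : Fin x) (r : Fin N → ZMod 2) : ZMod 2 :=
  ∑ j : Fin ℓ, r (blockIdx hN i j)

/-- The `b`-restriction of `t` w.r.t. block size `ℓ`. -/
def restrict {N x ℓ : ℕ} (hN : x * ℓ ≤ N) (b : Fin x → ZMod 2)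
    (t : Multiset (Fin N → ZMod 2)) : Multiset (Fin N → ZMod 2) :=
  t.filter (fun r => ∀ i, blockSum hN i r = b i)

/-- `(x,m,ℓ)`-safety. -/
def safe {N x ℓ : ℕ} (hN : x * ℓ ≤ N) : ℕ → Multiset (Fin N → ZMod 2) → Prop
  | 0, t => ∀ b b' : Fin x → ZMod 2, (restrict hN b t).card = (restrict hN b' t).card
  | m + 1, t => ∀ (j : Fin N) (c : ZMod 2), safe hN m (reduce j c t)

/-- `Reduces m s t`: `t` is obtained from `s` by `m` reductions. -/
inductive Reduces {N : ℕ} : ℕ → Multiset (Fin N → ZMod 2) → Multiset (Fin N → ZMod 2) → Prop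
  | refl (t) : Reduces 0 t t
  | step {m t t'} (j : Fin N) (b : ZMod 2) : Reduces m t t' → Reduces (m + 1) t (reduce j b t')

/-- Join of two tables matching the last `L` columns of the first table
with the first `L` columns of the second. -/
def join {c1 c2 L : ℕ} (h1 : L ≤ c1) (h2 : L ≤ c2)
    (t1 : Multiset (Fin c1 → ZMod 2)) (t2 : Multiset (Fin c2 → ZMod 2)) :
    Multiset (Fin (c1 + c2 - L) → ZMod 2) :=
  ∑ v : Fin (c1 + c2 - L) → ZMod 2,
    Multiset.replicate
      ((t1.count (fun i : Fin c1 => v ⟨i.1, by have := i.2; omega⟩)) *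
       (t2.count (fun i : Fin c2 => v ⟨c1 - L + i.1, by have := i.2; omega⟩))) v

/-- Full join of two tables on all columns. -/
def fullJoin {N : ℕ} (t1 t2 : Multiset (Fin N → ZMod 2)) : Multiset (Fin N → ZMod 2) :=
  ∑ v : Fin N → ZMod 2, Multiset.replicate (t1.count v * t2.count v) v

/-- Projection to the last `m` columns. -/
def lastProj {N m : ℕ} (h : m ≤ N) (r : Fin N → ZMod 2) : Fin m → ZMod 2 :=
  fun j => r ⟨N - m + j.1, by have := j.2; omega⟩

/-- XOR-sum of the last `m` columns. -/
def lastSum {N m : ℕ} (h : m ≤ N) (r : Fin N → ZMod 2) : ZMod 2 :=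
  xorSum (lastProj h r)

/-- Delete column `j` of an (n+1)-column row. -/
def deleteCol {n : ℕ} (j : Fin (n + 1)) (r : Fin (n + 1) → ZMod 2) : Fin n → ZMod 2 :=
  fun i => r (j.succAbove i)

/-!
Fixing every column except the `i`-th leaves only rows that agree off `i`, and such rows are told
apart by their XOR-sum. These are `n` reductions, so safety makes the surviving table balanced:
its rows of XOR-sum `0`, all equal to one vector, are as numerous as those of XOR-sum `1`, all equal
to the neighbor of that vector across column `i`.
-/

section

variable {N : ℕ}

/-- The iterated reduction of `t` that fixes each column `j ∈ S` to the bit `b j`,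
written as a single filter because the order of the reductions does not matter. -/
def reduceOn (S : Finset (Fin N)) (b : Fin N → ZMod 2) (t : Multiset (Fin N → ZMod 2)) :
    Multiset (Fin N → ZMod 2) :=
  t.filter (fun r => ∀ j ∈ S, r j = b j)

theorem reduceOn_empty (b : Fin N → ZMod 2) (t : Multiset (Fin N → ZMod 2)) :
    reduceOn ∅ b t = t := by
  simp [reduceOn]

theorem reduceOn_reduce (a : Fin N) (S : Finset (Fin N)) (b : Fin N → ZMod 2)
    (t : Multiset (Fin N → ZMod 2)) :
    reduceOn S b (reduce a (b a) t) = reduceOn (insert a S) b t := by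
  simp only [reduceOn, reduce, Multiset.filter_filter, Finset.forall_mem_insert, and_comm]

theorem reduceOn_congr {S : Finset (Fin N)} {b b' : Fin N → ZMod 2} (h : ∀ j ∈ S, b j = b' j)
    (t : Multiset (Fin N → ZMod 2)) : reduceOn S b t = reduceOn S b' t :=
  Multiset.filter_congr fun r _ => forall₂_congr fun j hj => by rw [h j hj]

theorem safeB_reduceOn {m : ℕ} {S : Finset (Fin N)} {t : Multiset (Fin N → ZMod 2)}
    (h : safeB (m + S.card) t) (b : Fin N → ZMod 2) : safeB m (reduceOn S b t) := by
  induction S using Finset.induction_on generalizing t with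
  | empty => rwa [reduceOn_empty]
  | insert a S ha ih =>
    rw [Finset.card_insert_of_notMem ha] at h
    rw [← reduceOn_reduce]
    exact ih (h a (b a))

theorem safeB.card_filter_xorSum_eq {t : Multiset (Fin N → ZMod 2)} (h : safeB 0 t)
    (c d : ZMod 2) :
    (t.filter (fun r => xorSum r = c)).card = (t.filter (fun r => xorSum r = d)).card := by
  have balanced : (t.filter (fun r => xorSum r = 0)).card =
      (t.filter (fun r => xorSum r = 1)).card := h
  fin_cases c <;> fin_cases d <;> first | rfl | exact balanced | exact balanced.symm

theorem xorSum_eq_iff_of_forall_ne {i : Fin N} {r s : Fin N → ZMod 2}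
    (h : ∀ j, j ≠ i → r j = s j) : xorSum r = xorSum s ↔ r = s := by
  refine ⟨fun hsum => ?_, congrArg xorSum⟩
  have hrest : ∑ j ∈ {i}ᶜ, r j = ∑ j ∈ {i}ᶜ, s j :=
    Finset.sum_congr rfl fun j hj => h j (by simpa using hj)
  rw [xorSum, xorSum, Fintype.sum_eq_add_sum_compl i r, Fintype.sum_eq_add_sum_compl i s,
    hrest, add_left_inj] at hsum
  funext j
  obtain rfl | hj := eq_or_ne j i
  exacts [hsum, h j hj]

theorem card_filter_xorSum_reduceOn_compl_singleton (i : Fin N) (b : Fin N → ZMod 2)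
    (t : Multiset (Fin N → ZMod 2)) :
    ((reduceOn {i}ᶜ b t).filter (fun r => xorSum r = xorSum b)).card = t.count b := by
  have eq_iff (r : Fin N → ZMod 2) :
      (xorSum r = xorSum b ∧ ∀ j ∈ ({i}ᶜ : Finset (Fin N)), r j = b j) ↔ b = r := by
    simp only [Finset.mem_compl, Finset.mem_singleton]
    constructor
    · rintro ⟨hsum, hr⟩
      exact ((xorSum_eq_iff_of_forall_ne hr).mp hsum).symm
    · rintro rfl
      exact ⟨rfl, fun _ _ => rfl⟩
  simp only [reduceOn, Multiset.filter_filter, eq_iff, Multiset.count,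
    Multiset.countP_eq_card_filter]

end

theorem safeB.count_eq_of_forall_ne {n : ℕ} {t : Multiset (Fin (n + 1) → ZMod 2)} (h : safeB n t)
    {i : Fin (n + 1)} {b b' : Fin (n + 1) → ZMod 2} (hb : ∀ j, j ≠ i → b' j = b j) :
    t.count b' = t.count b := by
  have balanced : safeB 0 (reduceOn {i}ᶜ b t) :=
    safeB_reduceOn (by simpa [Finset.card_compl] using h) b
  have hreduce : reduceOn {i}ᶜ b' t = reduceOn {i}ᶜ b t :=
    reduceOn_congr (fun j hj => hb j (by simpa using hj)) t
  calc t.count b'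
      = ((reduceOn {i}ᶜ b t).filter (fun r => xorSum r = xorSum b')).card := by
        rw [← hreduce, card_filter_xorSum_reduceOn_compl_singleton]
    _ = ((reduceOn {i}ᶜ b t).filter (fun r => xorSum r = xorSum b)).card :=
        balanced.card_filter_xorSum_eq _ _
    _ = t.count b := card_filter_xorSum_reduceOn_compl_singleton i b t

/-- if an (n+1)-column table is (1,n,n+1)-safe, then any vector
differing from a row in exactly one coordinate also occurs, with the same
multiplicity. -/
theorem safe_neighbor_count (n : ℕ) (t : Multiset (Fin (n + 1) → ZMod 2))
    (hsafe : safeB n t) (b0 b' : Fin (n + 1) → ZMod 2) (hb0 : b0 ∈ t)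
    (i : Fin (n + 1)) (hne : b' i ≠ b0 i) (heq : ∀ j, j ≠ i → b' j = b0 j) :
    b' ∈ t ∧ t.count b' = t.count b0 := by
  have hcount : t.count b' = t.count b0 := hsafe.count_eq_of_forall_ne heq
  exact ⟨Multiset.count_pos.mp (hcount ▸ Multiset.count_pos.mpr hb0), hcount⟩
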